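/- arXiv:1910.12109 — 2 statements merged into one kernel-verified Lean document; each statement's English description precedes it below -/
import Mathlib

section
/- Every finite simple graph that contains no induced claw, no induced co-claw, no clique of size 4, and no independent set of size 4 has at most 9 vertices; moreover, there exists such a graph with exactly 9 vertices (the 3×3 rook's graph, whose vertices are the pairs (i,j) with i,j ∈ {1,2,3} and in which two distinct pairs are adjacent if and only if they agree in one coordinate). -/
open SimpleGraph

/-- `G` contains an induced copy of `H`. -/
def HasInducedCopy {α β : Type*} (H : SimpleGraph α) (G : SimpleGraph β) : Prop :=
  Nonempty (H ↪g G)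

/-- The claw `K_{1,3}`. -/
def claw : SimpleGraph (Fin 4) := SimpleGraph.fromRel (fun u _ => u = 0)

/-- The co-claw: the complement of the claw. -/
def coClaw : SimpleGraph (Fin 4) := clawᶜ

/-- The `3 × 3` rook's graph: two distinct pairs are adjacent iff they agree in one
coordinate. -/
def rookGraph : SimpleGraph (Fin 3 × Fin 3) :=
  SimpleGraph.fromRel (fun u v => u.1 = v.1 ∨ u.2 = v.2)

/-- `s` contains neither a triangle nor an independent triple of `G`. -/
def HomogeneousTripleFree {V : Type*} (G : SimpleGraph V) (s : Finset V) : Prop :=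
  ∀ a ∈ s, ∀ b ∈ s, ∀ c ∈ s, a ≠ b → a ≠ c → b ≠ c →
    ¬ (G.Adj a b ∧ G.Adj a c ∧ G.Adj b c) ∧ ¬ (¬ G.Adj a b ∧ ¬ G.Adj a c ∧ ¬ G.Adj b c)

theorem HomogeneousTripleFree.compl {V : Type*} {G : SimpleGraph V} {s : Finset V}
    (h : HomogeneousTripleFree G s) : HomogeneousTripleFree Gᶜ s := by
  intro a ha b hb c hc hab hac hbc
  have := h a ha b hb c hc hab hac hbc
  simp only [SimpleGraph.compl_adj]
  tauto

theorem HasInducedCopy.compl {α β : Type*} {H : SimpleGraph α} {G : SimpleGraph β}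
    (h : HasInducedCopy H G) : HasInducedCopy Hᶜ Gᶜ :=
  h.map fun f => ⟨f.toEmbedding, by simp [SimpleGraph.compl_adj]⟩

theorem claw_adj (i j : Fin 4) : claw.Adj i j ↔ i ≠ j ∧ (i = 0 ∨ j = 0) := by
  simp [claw]

theorem hasInducedCopy_claw_iff {V : Type*} {G : SimpleGraph V} :
    HasInducedCopy claw G ↔ ∃ v a b c, (a ≠ b ∧ a ≠ c ∧ b ≠ c) ∧
      (G.Adj v a ∧ G.Adj v b ∧ G.Adj v c) ∧ ¬ G.Adj a b ∧ ¬ G.Adj a c ∧ ¬ G.Adj b c := by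
  constructor
  · rintro ⟨f⟩
    refine ⟨f 0, f 1, f 2, f 3, ?_, ?_, ?_⟩ <;>
      simp [f.map_adj_iff, claw_adj, f.injective.eq_iff]
  · rintro ⟨v, a, b, c, ⟨hab, hac, hbc⟩, ⟨va, vb, vc⟩, nab, nac, nbc⟩
    refine ⟨⟨⟨![v, a, b, c], ?_⟩, ?_⟩⟩
    · intro i j
      fin_cases i <;> fin_cases j <;>
        simp [va.ne, va.ne', vb.ne, vb.ne', vc.ne, vc.ne', hab, hac, hbc, hab.symm, hac.symm,
          hbc.symm]
    · intro i j
      change G.Adj (![v, a, b, c] i) (![v, a, b, c] j) ↔ claw.Adj i j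
      fin_cases i <;> fin_cases j <;>
        simp [claw_adj, va, vb, vc, va.symm, vb.symm, vc.symm, nab, nac, nbc,
          G.adj_comm b a, G.adj_comm c a, G.adj_comm c b]

theorem cliqueFree_four_iff {V : Type*} {G : SimpleGraph V} :
    G.CliqueFree 4 ↔ ∀ a b c d, G.Adj a b → G.Adj a c → G.Adj a d → G.Adj b c → G.Adj b d →
      ¬ G.Adj c d := by
  classical
  constructor
  · intro h a b c d hab hac had hbc hbd hcd
    refine h {a, b, c, d} ⟨?_, ?_⟩
    · simp [SimpleGraph.isClique_iff, *]
    · simp [hab.ne, hac.ne, had.ne, hbc.ne, hbd.ne, hcd.ne]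
  · rintro h s ⟨hs, hcard⟩
    obtain ⟨a, b, c, d, hab, hac, had, hbc, hbd, hcd, rfl⟩ := Finset.card_eq_four.mp hcard
    exact h a b c d (hs (by simp) (by simp) hab) (hs (by simp) (by simp) hac)
      (hs (by simp) (by simp) had) (hs (by simp) (by simp) hbc) (hs (by simp) (by simp) hbd)
      (hs (by simp) (by simp) hcd)

section Counting

open Finset

variable {V : Type*} {G : SimpleGraph V} [DecidableRel G.Adj]

theorem homogeneousTripleFree_neighborFinset [Fintype V] (hclaw : ¬ HasInducedCopy claw G)
    (hclique : G.CliqueFree 4) (v : V) : HomogeneousTripleFree G (G.neighborFinset v) := by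
  intro a ha b hb c hc hab hac hbc
  rw [SimpleGraph.mem_neighborFinset] at ha hb hc
  exact ⟨fun ⟨h₁, h₂, h₃⟩ => cliqueFree_four_iff.mp hclique v a b c ha hb hc h₁ h₂ h₃,
    fun h => hclaw (hasInducedCopy_claw_iff.mpr
      ⟨v, a, b, c, ⟨hab, hac, hbc⟩, ⟨ha, hb, hc⟩, h⟩)⟩

theorem HomogeneousTripleFree.card_filter_adj_le_two {s : Finset V}
    (h : HomogeneousTripleFree G s) {a : V} (ha : a ∈ s) : #{x ∈ s | G.Adj a x} ≤ 2 := by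
  by_contra! hcard
  obtain ⟨x, y, z, hx, hy, hz, hxy, hxz, hyz⟩ := Finset.two_lt_card_iff.mp hcard
  simp only [mem_filter] at hx hy hz
  have h₁ := (h a ha x hx.1 y hy.1 hx.2.ne hy.2.ne hxy).1
  have h₂ := (h a ha x hx.1 z hz.1 hx.2.ne hz.2.ne hxz).1
  have h₃ := (h a ha y hy.1 z hz.1 hy.2.ne hz.2.ne hyz).1
  have h₄ := (h x hx.1 y hy.1 z hz.1 hxy hxz hyz).2
  tauto

theorem HomogeneousTripleFree.card_le [DecidableEq V] {s : Finset V}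
    (h : HomogeneousTripleFree G s) {a : V} (ha : a ∈ s) : #s ≤ #{x ∈ s | G.Adj a x} + 3 := by
  have hsub : s ⊆ insert a ({x ∈ s | G.Adj a x} ∪ {x ∈ s | Gᶜ.Adj a x}) := by
    intro x hx
    by_cases hxa : x = a <;> by_cases hadj : G.Adj a x <;>
      simp [hx, hxa, hadj, SimpleGraph.compl_adj, Ne.symm]
  have h₁ := card_le_card hsub
  have h₂ := card_insert_le a ({x ∈ s | G.Adj a x} ∪ {x ∈ s | Gᶜ.Adj a x})
  have h₃ := card_union_le {x ∈ s | G.Adj a x} {x ∈ s | Gᶜ.Adj a x}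
  have h₄ := h.compl.card_filter_adj_le_two ha
  omega

theorem HomogeneousTripleFree.card_le_five {s : Finset V}
    (h : HomogeneousTripleFree G s) : #s ≤ 5 := by
  classical
  obtain rfl | ⟨a, ha⟩ := s.eq_empty_or_nonempty
  · simp
  · have := h.card_le ha
    have := h.card_filter_adj_le_two ha
    omega

theorem card_eq_degree_add_degree_compl [Fintype V] [DecidableEq V] (v : V) :
    Fintype.card V = #(G.neighborFinset v) + #(Gᶜ.neighborFinset v) + 1 := by
  have h : (univ : Finset V) = insert v (G.neighborFinset v ∪ Gᶜ.neighborFinset v) := by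
    ext x
    simp only [mem_univ, mem_insert, mem_union, SimpleGraph.mem_neighborFinset,
      SimpleGraph.compl_adj, true_iff]
    by_cases hx : x = v
    · exact Or.inl hx
    · have := Ne.symm hx
      tauto
  rw [← card_univ, h, card_insert_of_notMem (by simp), card_union_of_disjoint]
  rw [Finset.disjoint_left]
  intro x hx hx'
  simp only [SimpleGraph.mem_neighborFinset, SimpleGraph.compl_adj] at hx hx'
  exact hx'.2 hx

/-- Double counting of the edges between the neighbours and the non-neighbours of `v`: each
non-neighbour sees at least three of the five neighbours, while each neighbour sees at most two
non-neighbours. -/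
theorem card_compl_neighborFinset_le_three [Fintype V] [DecidableEq V]
    (hN : ∀ v, HomogeneousTripleFree G (G.neighborFinset v))
    (hM : ∀ v, HomogeneousTripleFree G (Gᶜ.neighborFinset v)) {v : V}
    (hv : #(G.neighborFinset v) = 5) : #(Gᶜ.neighborFinset v) ≤ 3 := by
  have hlow : ∀ b ∈ Gᶜ.neighborFinset v,
      3 ≤ #(bipartiteAbove G.Adj (G.neighborFinset v) b) := by
    intro b hb
    have hsplit : #{x ∈ G.neighborFinset v | G.Adj b x} +
        #{x ∈ G.neighborFinset v | ¬ G.Adj b x} = #(G.neighborFinset v) :=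
      card_filter_add_card_filter_not _
    have hmiss : #{x ∈ G.neighborFinset v | ¬ G.Adj b x} ≤ 2 := by
      by_contra! hcard
      obtain ⟨x, y, z, hx, hy, hz, hxy, hxz, hyz⟩ := Finset.two_lt_card_iff.mp hcard
      simp only [mem_filter] at hx hy hz
      have hpair : ∀ p q, (p ∈ G.neighborFinset v ∧ ¬ G.Adj b p) →
          (q ∈ G.neighborFinset v ∧ ¬ G.Adj b q) → ¬ G.Adj p q := by
        rintro p q ⟨hp, hbp⟩ ⟨hq, hbq⟩ hpq
        simp only [SimpleGraph.mem_neighborFinset, SimpleGraph.compl_adj] at hb hp hq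
        refine (hM b v ?_ p ?_ q ?_ hp.ne hq.ne hpq.ne).1 ⟨hp, hq, hpq⟩ <;>
          simp only [SimpleGraph.mem_neighborFinset, SimpleGraph.compl_adj]
        · exact ⟨hb.1.symm, fun h => hb.2 h.symm⟩
        · exact ⟨by rintro rfl; exact hb.2 hp, hbp⟩
        · exact ⟨by rintro rfl; exact hb.2 hq, hbq⟩
      exact (hN v x hx.1 y hy.1 z hz.1 hxy hxz hyz).2
        ⟨hpair x y hx hy, hpair x z hx hz, hpair y z hy hz⟩
    rw [bipartiteAbove]
    omega
  have hup : ∀ a ∈ G.neighborFinset v,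
      #(bipartiteBelow G.Adj (Gᶜ.neighborFinset v) a) ≤ 2 := by
    intro a ha
    have hin := (hN v).card_le ha
    have hdeg := (hN a).card_le_five
    have hva : v ∈ G.neighborFinset a := by
      simpa [SimpleGraph.adj_comm] using ha
    have hdisj : Disjoint {x ∈ G.neighborFinset v | G.Adj a x}
        (bipartiteBelow G.Adj (Gᶜ.neighborFinset v) a) := by
      rw [Finset.disjoint_left]
      simp +contextual [bipartiteBelow]
    have hsub : insert v ({x ∈ G.neighborFinset v | G.Adj a x} ∪
        bipartiteBelow G.Adj (Gᶜ.neighborFinset v) a) ⊆ G.neighborFinset a := by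
      intro x hx
      simp only [mem_insert, mem_union, bipartiteBelow, mem_filter] at hx
      rcases hx with rfl | hx | hx
      · exact hva
      · simpa using hx.2
      · simpa using hx.2.symm
    have hcard := card_le_card hsub
    rw [card_insert_of_notMem (by simp [bipartiteBelow]), card_union_of_disjoint hdisj] at hcard
    omega
  have := card_mul_le_card_mul G.Adj hlow hup
  omega

theorem card_le_nine [Fintype V] [DecidableEq V]
    (hN : ∀ v, HomogeneousTripleFree G (G.neighborFinset v))
    (hM : ∀ v, HomogeneousTripleFree G (Gᶜ.neighborFinset v)) : Fintype.card V ≤ 9 := by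
  rcases isEmpty_or_nonempty V with _ | ⟨⟨v⟩⟩
  · simp
  have hcard := card_eq_degree_add_degree_compl (G := G) v
  have h₁ := (hN v).card_le_five
  have h₂ := (hM v).card_le_five
  by_cases h₃ : #(G.neighborFinset v) = 5
  · have := card_compl_neighborFinset_le_three hN hM h₃
    omega
  by_cases h₄ : #(Gᶜ.neighborFinset v) = 5
  · have hcompl : ∀ w, Gᶜᶜ.neighborFinset w = G.neighborFinset w := fun w => by ext x; simp
    have := card_compl_neighborFinset_le_three (G := Gᶜ) (fun w => (hM w).compl)
      (fun w => by rw [hcompl]; exact (hN w).compl) h₄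
    rw [hcompl] at this
    omega
  omega

end Counting

theorem rookGraph_adj (u v : Fin 3 × Fin 3) :
    rookGraph.Adj u v ↔ u ≠ v ∧ (u.1 = v.1 ∨ u.2 = v.2) := by
  simp only [rookGraph, SimpleGraph.fromRel_adj, eq_comm (a := v.1), eq_comm (a := v.2), or_self]

instance : DecidableRel rookGraph.Adj := fun u v => decidable_of_iff' _ (rookGraph_adj u v)

set_option maxRecDepth 100000 in
theorem rookGraph_not_hasInducedCopy_claw : ¬ HasInducedCopy claw rookGraph := by
  rw [hasInducedCopy_claw_iff]
  decide

set_option maxRecDepth 100000 in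
set_option synthInstance.maxHeartbeats 400000 in
set_option synthInstance.maxSize 4096 in
theorem rookGraph_not_hasInducedCopy_coClaw : ¬ HasInducedCopy coClaw rookGraph := by
  intro h
  have h' : HasInducedCopy claw rookGraphᶜ := by simpa [coClaw] using h.compl
  rw [hasInducedCopy_claw_iff] at h'
  revert h'
  decide

set_option maxRecDepth 100000 in
set_option synthInstance.maxHeartbeats 400000 in
set_option synthInstance.maxSize 4096 in
theorem rookGraph_cliqueFree_four : rookGraph.CliqueFree 4 := by
  rw [cliqueFree_four_iff]
  decide

set_option maxRecDepth 100000 in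
set_option synthInstance.maxHeartbeats 400000 in
set_option synthInstance.maxSize 4096 in
theorem rookGraph_compl_cliqueFree_four : rookGraphᶜ.CliqueFree 4 := by
  rw [cliqueFree_four_iff]
  decide

/-- Every finite (claw, co-claw)-free graph with no clique of size 4 and no independent
set of size 4 has at most 9 vertices, and the `3 × 3` rook's graph is such a graph with
exactly 9 vertices. -/
theorem claw_coClaw_K4_coK4_free_max_nine :
    (∀ (V : Type) [Fintype V] (G : SimpleGraph V),
      ¬ HasInducedCopy claw G → ¬ HasInducedCopy coClaw G →
      G.CliqueFree 4 → Gᶜ.CliqueFree 4 → Fintype.card V ≤ 9) ∧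
    (¬ HasInducedCopy claw rookGraph ∧ ¬ HasInducedCopy coClaw rookGraph ∧
      rookGraph.CliqueFree 4 ∧ rookGraphᶜ.CliqueFree 4 ∧
      Fintype.card (Fin 3 × Fin 3) = 9) := by
  refine ⟨fun V _ G hclaw hcoClaw hclique hindep => ?_, rookGraph_not_hasInducedCopy_claw,
    rookGraph_not_hasInducedCopy_coClaw, rookGraph_cliqueFree_four,
    rookGraph_compl_cliqueFree_four, rfl⟩
  · classical
    refine card_le_nine (homogeneousTripleFree_neighborFinset hclaw hclique) fun v => ?_
    have h := (homogeneousTripleFree_neighborFinset (G := Gᶜ)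
      (fun h => hcoClaw (by simpa [coClaw] using h.compl)) hindep v).compl
    rwa [compl_compl] at h
end

section
/- Let G be a finite simple graph containing no induced co-diamond, no induced paw and no induced claw. Then: (i) if G is connected, then G is a path with at most 5 vertices, or a cycle with at most 6 vertices, or the complement of a graph in which every vertex has degree at most 1; (ii) if G has exactly two connected components, then either both components are complete graphs, or one component is a single vertex and the other is the complement of a graph in which every vertex has degree at most 1; (iii) if G has at least three connected components, then G has no edges. -/
open SimpleGraph

/-- The diamond: `K_4` minus the edge `{2,3}`. -/
def diamond : SimpleGraph (Fin 4) := (⊤ : SimpleGraph (Fin 4)).deleteEdges {s(2, 3)}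

/-- The co-diamond: the complement of the diamond. -/
def coDiamond : SimpleGraph (Fin 4) := diamondᶜ

/-- The paw: a triangle `{0,1,2}` plus the vertex `3` adjacent only to `0`. -/
def paw : SimpleGraph (Fin 4) :=
  SimpleGraph.fromRel (fun u v => (u ≠ 3 ∧ v ≠ 3) ∨ (u = 0 ∧ v = 3))

section ForbiddenSubgraphs

variable {V : Type*} {G : SimpleGraph V}

theorem adj_of_coDiamond_free (h : ¬ HasInducedCopy coDiamond G) {a b c d : V}
    (hab : G.Adj a b) (hac : ¬ G.Adj a c) (hbc : ¬ G.Adj b c) (had : ¬ G.Adj a d)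
    (hbd : ¬ G.Adj b d) (hcd : c ≠ d) : G.Adj c d := by
  by_contra hn
  have hba := hab.symm
  refine h ⟨⟨⟨![c, d, a, b], fun i j hij => ?_⟩, fun {i j} => ?_⟩⟩
  · fin_cases i <;> fin_cases j <;> simp_all
  · change G.Adj (![c, d, a, b] i) (![c, d, a, b] j) ↔ _
    fin_cases i <;> fin_cases j <;> simp_all [coDiamond, diamond, G.adj_comm]

theorem adj_or_adj_of_paw_free (h : ¬ HasInducedCopy paw G) {a b c d : V}
    (hab : G.Adj a b) (hac : G.Adj a c) (hbc : G.Adj b c) (had : G.Adj a d) (hdb : d ≠ b)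
    (hdc : d ≠ c) : G.Adj b d ∨ G.Adj c d := by
  by_contra! hn
  obtain ⟨hbd, hcd⟩ := hn
  have nab := hab.ne
  have nac := hac.ne
  have nbc := hbc.ne
  have nad := had.ne
  refine h ⟨⟨⟨![a, b, c, d], fun i j hij => ?_⟩, fun {i j} => ?_⟩⟩
  · fin_cases i <;> fin_cases j <;> simp_all
  · change G.Adj (![a, b, c, d] i) (![a, b, c, d] j) ↔ _
    fin_cases i <;> fin_cases j <;> simp_all [paw, G.adj_comm]

theorem adj_of_claw_free (h : ¬ HasInducedCopy claw G) {x a b c : V}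
    (hxa : G.Adj x a) (hxb : G.Adj x b) (hxc : G.Adj x c) (nab : a ≠ b) (nac : a ≠ c)
    (nbc : b ≠ c) : G.Adj a b ∨ G.Adj a c ∨ G.Adj b c := by
  by_contra! hn
  obtain ⟨hab, hac, hbc⟩ := hn
  have nxa := hxa.ne
  have nxb := hxb.ne
  have nxc := hxc.ne
  refine h ⟨⟨⟨![x, a, b, c], fun i j hij => ?_⟩, fun {i j} => ?_⟩⟩
  · fin_cases i <;> fin_cases j <;> simp_all
  · change G.Adj (![x, a, b, c] i) (![x, a, b, c] j) ↔ _
    fin_cases i <;> fin_cases j <;> simp_all [claw, G.adj_comm]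

end ForbiddenSubgraphs

section Connectivity

variable {V : Type*} {G : SimpleGraph V}

theorem SimpleGraph.Reachable.exists_adj_of_ne {u v : V} (h : G.Reachable u v) (hne : u ≠ v) :
    ∃ x, G.Adj u x := by
  obtain ⟨p⟩ := h
  cases p with
  | nil => exact absurd rfl hne
  | cons hadj _ => exact ⟨_, hadj⟩

/-- A property closed under adjacency that holds somewhere in a connected graph holds
everywhere. -/
theorem SimpleGraph.Connected.forall_of_adj_closed (hG : G.Connected) {P : V → Prop}
    (hP : ∀ x y, P x → G.Adj x y → P y) {u : V} (hu : P u) (v : V) : P v := by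
  obtain ⟨p⟩ := hG.preconnected u v
  induction p with
  | nil => exact hu
  | cons hadj _ ih => exact ih (hP _ _ hu hadj)

end Connectivity

section WithTriangle

variable {V : Type*} {G : SimpleGraph V}

theorem exists_triangle_of_adj (hpaw : ¬ HasInducedCopy paw G) (hG : G.Connected) {a b c : V}
    (hab : G.Adj a b) (hac : G.Adj a c) (hbc : G.Adj b c) {u v : V} (huv : G.Adj u v) :
    ∃ t, G.Adj u t ∧ G.Adj v t := by
  have step : ∀ x y, (∃ s t, G.Adj x s ∧ G.Adj x t ∧ G.Adj s t) → G.Adj x y →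
      ∃ t, G.Adj x t ∧ G.Adj y t := by
    rintro x y ⟨s, t, hs, ht, hst⟩ hxy
    by_cases hys : y = s
    · exact ⟨t, ht, hys ▸ hst⟩
    by_cases hyt : y = t
    · exact ⟨s, hs, hyt ▸ hst.symm⟩
    rcases adj_or_adj_of_paw_free hpaw hs ht hst hxy hys hyt with h | h
    · exact ⟨s, hs, h.symm⟩
    · exact ⟨t, ht, h.symm⟩
  refine step u v (hG.forall_of_adj_closed (P := fun x => ∃ s t, G.Adj x s ∧ G.Adj x t ∧
    G.Adj s t) (fun x y hx hxy => ?_) ⟨b, c, hab, hac, hbc⟩ u) huv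
  obtain ⟨t, hxt, hyt⟩ := step x y hx hxy
  exact ⟨x, t, hxy.symm, hyt, hxt⟩

/-- In a connected paw-free graph with a triangle, every edge is dominating. -/
theorem adj_or_adj_of_connected_of_triangle (hpaw : ¬ HasInducedCopy paw G) (hG : G.Connected)
    {a b c : V} (hab : G.Adj a b) (hac : G.Adj a c) (hbc : G.Adj b c) {u v : V}
    (huv : G.Adj u v) (w : V) : G.Adj u w ∨ G.Adj v w := by
  refine hG.forall_of_adj_closed (P := fun w => G.Adj u w ∨ G.Adj v w) ?_ (Or.inr huv.symm) w
  have key : ∀ {u v x y : V}, G.Adj u v → G.Adj u x → G.Adj x y →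
      G.Adj u y ∨ G.Adj v y := by
    intro u v x y huv hux hxy
    by_contra! hn
    obtain ⟨huy, hvy⟩ := hn
    have hyu : y ≠ u := by rintro rfl; exact hvy huv.symm
    have hyv : y ≠ v := by rintro rfl; exact huy huv
    have common : ∀ t, G.Adj u t → G.Adj v t → ¬ G.Adj t y := fun t hut hvt hty =>
      (adj_or_adj_of_paw_free hpaw hut.symm hvt.symm huv hty hyu hyv).elim huy hvy
    have hvx : ¬ G.Adj v x := fun h => common x hux h hxy
    have hvx' : v ≠ x := by rintro rfl; exact hvy hxy
    obtain ⟨t, hut, hxt⟩ := exists_triangle_of_adj hpaw hG hab hac hbc hux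
    by_cases htv : v = t
    · exact hvx (htv ▸ hxt.symm)
    by_cases hty : y = t
    · exact huy (hty ▸ hut)
    have hvt := (adj_or_adj_of_paw_free hpaw hux hut hxt huv hvx' htv).resolve_left
      fun h => hvx h.symm
    exact common t hut hvt.symm <| (adj_or_adj_of_paw_free hpaw hux.symm hxt hut hxy hyu
      hty).resolve_left huy
  rintro x y (h | h) hxy
  · exact key huv h hxy
  · exact (key huv.symm h hxy).symm

theorem compl_neighborSet_subsingleton_of_triangle (hpaw : ¬ HasInducedCopy paw G)
    (hclaw : ¬ HasInducedCopy claw G) (hG : G.Connected)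
    {a b c : V} (hab : G.Adj a b) (hac : G.Adj a c) (hbc : G.Adj b c) (v : V) :
    (Gᶜ.neighborSet v).Subsingleton := by
  rintro s hs t ht
  rw [mem_neighborSet, compl_adj] at hs ht
  by_contra hst
  have dom := fun {u v : V} (huv : G.Adj u v) =>
    adj_or_adj_of_connected_of_triangle hpaw hG hab hac hbc huv
  obtain ⟨x, hx⟩ := (hG.preconnected v s).exists_adj_of_ne hs.1
  have hxs := (dom hx s).resolve_left hs.2
  have hxt := (dom hx t).resolve_left ht.2
  rcases adj_of_claw_free hclaw hx.symm hxs hxt hs.1 ht.1 hst with h | h | h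
  · exact hs.2 h
  · exact ht.2 h
  · exact (dom h v).elim (fun h => hs.2 h.symm) (fun h => ht.2 h.symm)

end WithTriangle

section DegreeAtMostTwo

variable {V : Type*} {G : SimpleGraph V}

/-- The first `n` terms of `f` are the successive vertices of a path in `G`. -/
def IsPathSeq (G : SimpleGraph V) (n : ℕ) (f : ℕ → V) : Prop :=
  (∀ i < n, ∀ j < n, f i = f j → i = j) ∧ ∀ i, i + 1 < n → G.Adj (f i) (f (i + 1))

theorem IsPathSeq.le_card [Fintype V] {n : ℕ} {f : ℕ → V} (h : IsPathSeq G n f) :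
    n ≤ Fintype.card V := by
  have := Fintype.card_le_of_injective (fun i : Fin n => f i)
    fun i j hij => Fin.ext (h.1 i i.2 j j.2 hij)
  simpa using this

theorem IsPathSeq.cons {n : ℕ} {f : ℕ → V} (h : IsPathSeq G n f) {x : V}
    (hx : ∀ i < n, f i ≠ x) (hadj : G.Adj x (f 0)) :
    IsPathSeq G (n + 1) (fun i => Nat.casesOn i x f) := by
  refine ⟨fun i hi j hj hij => ?_, fun i hi => ?_⟩
  · rcases i with _ | i <;> rcases j with _ | j
    · rfl
    · exact absurd hij.symm (hx j (by omega))
    · exact absurd hij (hx i (by omega))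
    · rw [h.1 i (by omega) j (by omega) hij]
  · rcases i with _ | i
    · exact hadj
    · exact h.2 i (by omega)

theorem IsPathSeq.reverse {n : ℕ} {f : ℕ → V} (h : IsPathSeq G n f) :
    IsPathSeq G n (fun i => f (n - 1 - i)) := by
  refine ⟨fun i hi j hj hij => ?_, fun i hi => ?_⟩
  · have := h.1 _ (by omega) _ (by omega) hij
    omega
  · have := h.2 (n - 1 - (i + 1)) (by omega)
    rw [show n - 1 - (i + 1) + 1 = n - 1 - i by omega] at this
    exact this.symm

theorem exists_maximal_isPathSeq [Fintype V] [Nonempty V] (G : SimpleGraph V) :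
    ∃ n f, 0 < n ∧ IsPathSeq G n f ∧ ∀ g, ¬ IsPathSeq G (n + 1) g := by
  classical
  have h1 : ∃ f, IsPathSeq G 1 f :=
    ⟨fun _ => Classical.arbitrary V, fun i hi j hj _ => by omega, fun i hi => by omega⟩
  have hcard : 1 ≤ Fintype.card V := Fintype.card_pos
  let P := fun n => ∃ f, IsPathSeq G n f
  let n := Nat.findGreatest P (Fintype.card V)
  obtain ⟨f, hf⟩ : ∃ f, IsPathSeq G n f := Nat.findGreatest_spec (P := P) hcard h1
  refine ⟨n, f, Nat.le_findGreatest (P := P) hcard h1, hf, fun g hg => ?_⟩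
  have : n + 1 ≤ n := Nat.le_findGreatest (P := P) hg.le_card ⟨g, hg⟩
  omega

variable {n : ℕ} {f : ℕ → V}

/-- Along a maximal path in a graph of maximum degree two, a neighbour of a vertex of the path
is one of its path neighbours, or both vertices are ends of the path. -/
theorem IsPathSeq.exists_of_adj (hf : IsPathSeq G n f) (hmax : ∀ g, ¬ IsPathSeq G (n + 1) g)
    (hdeg : ∀ x a b c, G.Adj x a → G.Adj x b → G.Adj x c → a = b ∨ a = c ∨ b = c)
    {i : ℕ} (hi : i < n) {y : V} (hy : G.Adj (f i) y) :
    ∃ j < n, f j = y ∧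
      (i + 1 = j ∨ j + 1 = i ∨ (i = 0 ∧ j + 1 = n) ∨ (j = 0 ∧ i + 1 = n)) := by
  have interior : ∀ k z, 0 < k → k + 1 < n → G.Adj (f k) z → z = f (k - 1) ∨ z = f (k + 1) := by
    intro k z hk0 hk hz
    have e1 := hf.2 (k - 1) (by omega)
    rw [Nat.sub_add_cancel hk0] at e1
    rcases hdeg _ _ _ _ e1.symm (hf.2 k hk) hz with h | h | h
    · have := hf.1 _ (by omega) _ (by omega) h
      omega
    · exact Or.inl h.symm
    · exact Or.inr h.symm
  by_cases hint : 0 < i ∧ i + 1 < n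
  · rcases interior i y hint.1 hint.2 hy with h | h
    · exact ⟨i - 1, by omega, h.symm, by omega⟩
    · exact ⟨i + 1, by omega, h.symm, by omega⟩
  obtain ⟨j, hj, rfl⟩ : ∃ j < n, f j = y := by
    by_contra! hout
    rcases Nat.eq_zero_or_pos i with rfl | h0
    · exact hmax _ (hf.cons hout hy.symm)
    · refine hmax _ (hf.reverse.cons (fun k hk => hout _ (by omega)) (x := y) ?_)
      rw [show n - 1 - 0 = i by omega]
      exact hy.symm
  refine ⟨j, hj, rfl, ?_⟩
  have hij : i ≠ j := by rintro rfl; exact hy.ne rfl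
  by_cases hjint : 0 < j ∧ j + 1 < n
  · rcases interior j _ hjint.1 hjint.2 hy.symm with h | h
    · have := hf.1 _ hi _ (by omega) h
      omega
    · have := hf.1 _ hi _ (by omega) h
      omega
  · omega

theorem isPath_or_isCycle_of_degree_le_two [Fintype V] (hG : G.Connected)
    (hco : ¬ HasInducedCopy coDiamond G)
    (hdeg : ∀ x a b c, G.Adj x a → G.Adj x b → G.Adj x c → a = b ∨ a = c ∨ b = c) :
    (∃ n : ℕ, n ≤ 5 ∧ Nonempty (G ≃g pathGraph n)) ∨
      ∃ n : ℕ, 3 ≤ n ∧ n ≤ 6 ∧ Nonempty (G ≃g cycleGraph n) := by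
  have := hG.nonempty
  obtain ⟨n, f, hn, hf, hmax⟩ := exists_maximal_isPathSeq G
  have nbr := fun {i : ℕ} (hi : i < n) {y : V} (hy : G.Adj (f i) y) =>
    hf.exists_of_adj hmax hdeg hi hy
  have adj_imp : ∀ i < n, ∀ j < n, G.Adj (f i) (f j) →
      i + 1 = j ∨ j + 1 = i ∨ (i = 0 ∧ j + 1 = n) ∨ (j = 0 ∧ i + 1 = n) := by
    intro i hi j hj h
    obtain ⟨k, hk, hkj, h⟩ := nbr hi h
    rwa [hf.1 k hk j hj hkj] at h
  have hsurj : ∀ v, ∃ i < n, f i = v := by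
    refine hG.forall_of_adj_closed ?_ (u := f 0) ⟨0, hn, rfl⟩
    rintro _ y ⟨i, hi, rfl⟩ hy
    obtain ⟨j, hj, hjy, -⟩ := nbr hi hy
    exact ⟨j, hj, hjy⟩
  let e : Fin n ≃ V := Equiv.ofBijective (fun i => f i)
    ⟨fun i j hij => Fin.ext (hf.1 i i.2 j j.2 hij), fun v => by
      obtain ⟨i, hi, h⟩ := hsurj v
      exact ⟨⟨i, hi⟩, h⟩⟩
  have he : ∀ i, e i = f i := fun _ => rfl
  by_cases hc : 3 ≤ n ∧ G.Adj (f 0) (f (n - 1))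
  · obtain ⟨h3, hends⟩ := hc
    have adj_iff : ∀ i < n, ∀ j < n, G.Adj (f i) (f j) ↔
        (i + 1 = j ∨ j + 1 = i ∨ (i = 0 ∧ j + 1 = n) ∨ (j = 0 ∧ i + 1 = n)) := by
      refine fun i hi j hj => ⟨adj_imp i hi j hj, ?_⟩
      rintro (rfl | rfl | ⟨rfl, h⟩ | ⟨rfl, h⟩)
      · exact hf.2 _ hj
      · exact (hf.2 _ hi).symm
      · rwa [show j = n - 1 by omega]
      · rw [show i = n - 1 by omega]
        exact hends.symm
    have h6 : n ≤ 6 := by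
      by_contra! h
      have nadj : ∀ i j, i < 7 → j < 7 → 0 < i → i + 1 < j → ¬ G.Adj (f i) (f j) := by
        intro i j hi hj hi0 hij hadj
        have := adj_imp i (by omega) j (by omega) hadj
        omega
      refine nadj 4 6 (by omega) (by omega) (by omega) (by omega) <|
        adj_of_coDiamond_free hco (hf.2 1 (by omega)) (nadj _ _ ?_ ?_ ?_ ?_)
          (nadj _ _ ?_ ?_ ?_ ?_) (nadj _ _ ?_ ?_ ?_ ?_) (nadj _ _ ?_ ?_ ?_ ?_)
          fun h => absurd (hf.1 _ ?_ _ ?_ h) ?_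
      all_goals omega
    refine Or.inr ⟨n, h3, h6, ⟨(RelIso.mk e fun {i j} => ?_ : cycleGraph n ≃g G).symm⟩⟩
    rw [he, he, adj_iff i i.2 j j.2, cycleGraph_adj']
    clear_value e
    clear he e
    interval_cases n <;> revert i j <;> decide
  · have adj_iff : ∀ i < n, ∀ j < n, G.Adj (f i) (f j) ↔ (i + 1 = j ∨ j + 1 = i) := by
      refine fun i hi j hj => ⟨fun h => ?_, ?_⟩
      · by_contra hne
        rcases adj_imp i hi j hj h with h' | h' | ⟨rfl, h'⟩ | ⟨rfl, h'⟩
        · omega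
        · omega
        · rw [show j = n - 1 by omega] at h
          have : n - 1 ≠ 0 := by intro h0; rw [h0] at h; exact h.ne rfl
          exact hc ⟨by omega, h⟩
        · rw [show i = n - 1 by omega] at h
          have : n - 1 ≠ 0 := by intro h0; rw [h0] at h; exact h.ne rfl
          exact hc ⟨by omega, h.symm⟩
      · rintro (rfl | rfl)
        · exact hf.2 _ hj
        · exact (hf.2 _ hi).symm
    have h5 : n ≤ 5 := by
      by_contra! h
      have nadj : ∀ i j, i < 6 → j < 6 → i + 1 < j → ¬ G.Adj (f i) (f j) := by
        intro i j hi hj hij hadj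
        have := (adj_iff i (by omega) j (by omega)).1 hadj
        omega
      refine nadj 3 5 (by omega) (by omega) (by omega) <|
        adj_of_coDiamond_free hco (hf.2 0 (by omega)) (nadj _ _ ?_ ?_ ?_)
          (nadj _ _ ?_ ?_ ?_) (nadj _ _ ?_ ?_ ?_) (nadj _ _ ?_ ?_ ?_)
          fun h => absurd (hf.1 _ ?_ _ ?_ h) ?_
      all_goals omega
    refine Or.inl ⟨n, h5, ⟨(RelIso.mk e fun {i j} => ?_ : pathGraph n ≃g G).symm⟩⟩
    rw [he, he, adj_iff i i.2 j j.2, pathGraph_adj]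

end DegreeAtMostTwo

section Disconnected

variable {V : Type*} {G : SimpleGraph V}

/-- If `b` is isolated, all other vertices are non-isolated, and `G` is co-diamond- and
claw-free, then every vertex other than `b` has at most one non-neighbour apart from `b`. -/
theorem nonneighbors_subsingleton_of_isolated (hco : ¬ HasInducedCopy coDiamond G)
    (hclaw : ¬ HasInducedCopy claw G) {b : V} (hb : ∀ w, ¬ G.Adj b w)
    (hnbr : ∀ u, u ≠ b → ∃ x, G.Adj u x) {u : V} (hu : u ≠ b) :
    {w : V | w ≠ b ∧ w ≠ u ∧ ¬ G.Adj u w}.Subsingleton := by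
  rintro s ⟨hsb, hsu, hs⟩ t ⟨htb, htu, ht⟩
  by_contra hst
  have dom : ∀ {p q r : V}, G.Adj p q → r ≠ b → ¬ G.Adj p r → G.Adj q r := by
    intro p q r hpq hr hpr
    by_contra hqr
    exact hb r (adj_of_coDiamond_free hco hpq (fun h => hb _ h.symm) (fun h => hb _ h.symm)
      hpr hqr hr.symm)
  obtain ⟨x, hx⟩ := hnbr u hu
  rcases adj_of_claw_free hclaw hx.symm (dom hx hsb hs) (dom hx htb ht) hsu.symm htu.symm hst
    with h | h | h
  · exact hs h
  · exact ht h
  · exact ht (dom h hu fun h => hs h.symm).symm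

theorem complete_or_isolated_of_two_components (hco : ¬ HasInducedCopy coDiamond G)
    (hclaw : ¬ HasInducedCopy claw G) (hcard : Nat.card G.ConnectedComponent = 2) :
    (∀ u v : V, G.Reachable u v → u ≠ v → G.Adj u v) ∨
      ∃ v : V, (∀ w, ¬ G.Adj v w) ∧
        ∀ u : V, u ≠ v → {w : V | w ≠ v ∧ w ≠ u ∧ ¬ G.Adj u w}.Subsingleton := by
  by_contra! hcon
  obtain ⟨⟨u, v, huv, hne, hnadj⟩, hcon⟩ := hcon
  obtain ⟨c, hc, huniq⟩ := (Nat.card_eq_two_iff' (G.connectedComponentMk u)).1 hcard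
  induction c using SimpleGraph.ConnectedComponent.ind with | h b => ?_
  have hbu : ¬ G.Reachable b u := fun h => hc (ConnectedComponent.sound h)
  have hreach : ∀ w, ¬ G.Reachable w u → G.Reachable w b := fun w hw =>
    ConnectedComponent.exact (huniq _ fun h => hw (ConnectedComponent.exact h))
  have hb : ∀ w, ¬ G.Adj b w := by
    intro w hw
    have hwu : ¬ G.Reachable w u := fun h => hbu (hw.reachable.trans h)
    exact hnadj (adj_of_coDiamond_free hco hw (fun h => hbu h.reachable)
      (fun h => hwu h.reachable) (fun h => hbu (h.reachable.trans huv.symm))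
      (fun h => hwu (h.reachable.trans huv.symm)) hne)
  have hnbr : ∀ w, w ≠ b → ∃ x, G.Adj w x := by
    intro w hwb
    by_cases hwu : G.Reachable w u
    · by_cases h : w = u
      · exact h ▸ huv.exists_adj_of_ne hne
      · exact hwu.exists_adj_of_ne h
    · exact (hreach w hwu).exists_adj_of_ne hwb
  obtain ⟨w, hw, h⟩ := hcon b hb
  exact Set.not_subsingleton_iff.2 h (nonneighbors_subsingleton_of_isolated hco hclaw hb hnbr hw)

theorem not_adj_of_three_components (hco : ¬ HasInducedCopy coDiamond G)
    (hcard : 3 ≤ Nat.card G.ConnectedComponent) (u v : V) : ¬ G.Adj u v := by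
  intro huv
  have : Finite G.ConnectedComponent := Nat.finite_of_card_ne_zero (by omega)
  have := Fintype.ofFinite G.ConnectedComponent
  rw [Nat.card_eq_fintype_card] at hcard
  obtain ⟨c, d, hcd, hc, hd⟩ : ∃ c d : G.ConnectedComponent, c ≠ d ∧
      c ≠ G.connectedComponentMk u ∧ d ≠ G.connectedComponentMk u := by
    obtain ⟨x, y, z, hxy, hxz, hyz⟩ := Fintype.two_lt_card_iff.1 hcard
    by_cases hx : x = G.connectedComponentMk u
    · exact ⟨y, z, hyz, hx ▸ hxy.symm, hx ▸ hxz.symm⟩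
    by_cases hy : y = G.connectedComponentMk u
    · exact ⟨x, z, hxz, hx, hy ▸ hyz.symm⟩
    · exact ⟨x, y, hxy, hx, hy⟩
  induction c using SimpleGraph.ConnectedComponent.ind with | h a => ?_
  induction d using SimpleGraph.ConnectedComponent.ind with | h b => ?_
  have far : ∀ {w}, G.connectedComponentMk w ≠ G.connectedComponentMk u →
      ¬ G.Adj u w ∧ ¬ G.Adj v w := fun hw =>
    ⟨fun h => hw (ConnectedComponent.sound h.symm.reachable),
      fun h => hw (ConnectedComponent.sound (h.symm.reachable.trans huv.symm.reachable))⟩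
  exact hcd (ConnectedComponent.sound (adj_of_coDiamond_free hco huv (far hc).1 (far hc).2
    (far hd).1 (far hd).2 fun h => hcd (h ▸ rfl)).reachable)

end Disconnected

/-- Structure of finite `(co-diamond, paw, claw)`-free graphs `G`:
(i) if `G` is connected, it is a path on at most 5 vertices, a cycle on at most 6
vertices, or the complement of a graph of maximum degree at most 1;
(ii) if `G` has exactly two connected components, then either every component is complete,
or one component is a single vertex and the rest is the complement of a graph of maximum
degree at most 1;
(iii) if `G` has at least three connected components, then `G` has no edges. -/
theorem coDiamond_paw_claw_free_structure {V : Type} [Fintype V] (G : SimpleGraph V)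
    (h1 : ¬ HasInducedCopy coDiamond G) (h2 : ¬ HasInducedCopy paw G)
    (h3 : ¬ HasInducedCopy claw G) :
    (G.Connected →
      (∃ n : ℕ, n ≤ 5 ∧ Nonempty (G ≃g pathGraph n)) ∨
      (∃ n : ℕ, 3 ≤ n ∧ n ≤ 6 ∧ Nonempty (G ≃g cycleGraph n)) ∨
      (∀ v : V, (Gᶜ.neighborSet v).Subsingleton)) ∧
    (Nat.card G.ConnectedComponent = 2 →
      (∀ u v : V, G.Reachable u v → u ≠ v → G.Adj u v) ∨
      (∃ v : V, (∀ w, ¬ G.Adj v w) ∧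
        ∀ u : V, u ≠ v → {w : V | w ≠ v ∧ w ≠ u ∧ ¬ G.Adj u w}.Subsingleton)) ∧
    (3 ≤ Nat.card G.ConnectedComponent → ∀ u v : V, ¬ G.Adj u v) := by
  refine ⟨fun hG => ?_, complete_or_isolated_of_two_components h1 h3,
    not_adj_of_three_components h1⟩
  by_cases htri : ∃ a b c, G.Adj a b ∧ G.Adj a c ∧ G.Adj b c
  · obtain ⟨a, b, c, hab, hac, hbc⟩ := htri
    exact Or.inr (Or.inr (compl_neighborSet_subsingleton_of_triangle h2 h3 hG hab hac hbc))
  · rw [← or_assoc]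
    refine Or.inl (isPath_or_isCycle_of_degree_le_two hG h1 fun x a b c ha hb hc => ?_)
    by_contra! hne
    rcases adj_of_claw_free h3 ha hb hc hne.1 hne.2.1 hne.2.2 with h | h | h
    · exact htri ⟨x, a, b, ha, hb, h⟩
    · exact htri ⟨x, a, c, ha, hc, h⟩
    · exact htri ⟨x, b, c, hb, hc, h⟩
end
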